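/- arXiv:1910.12405 — 2 statements merged into one kernel-verified Lean document; each statement's English description precedes it below -/
import Mathlib

section
/- Let p be a prime and k a commutative ring with p·1 = 0, and let W = W_d(k) be the d-th Weyl algebra over k (d ≥ 1), with center Z and with A ⊆ W the k-subalgebra generated by t_1, …, t_d, ∂_1^p, …, ∂_d^p. Regard W as a right A-module by right multiplication. Then the natural map W ⊗_Z A → End_A(W), sending δ ⊗ a to the right-A-linear endomorphism x ↦ δ·x·a, is an isomorphism of rings. -/
noncomputable section

/-- The defining relations of the `d`-th Weyl algebra: `t_i t_j = t_j t_i`,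
`∂_i ∂_j = ∂_j ∂_i` and `∂_i t_j = t_j ∂_i + δ_{ij}`. -/
inductive WeylRel (k : Type*) [CommRing k] (d : ℕ) :
    FreeAlgebra k (Fin d ⊕ Fin d) → FreeAlgebra k (Fin d ⊕ Fin d) → Prop
  | tt (i j : Fin d) :
      WeylRel k d (FreeAlgebra.ι k (Sum.inl i) * FreeAlgebra.ι k (Sum.inl j))
        (FreeAlgebra.ι k (Sum.inl j) * FreeAlgebra.ι k (Sum.inl i))
  | dd (i j : Fin d) :
      WeylRel k d (FreeAlgebra.ι k (Sum.inr i) * FreeAlgebra.ι k (Sum.inr j))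
        (FreeAlgebra.ι k (Sum.inr j) * FreeAlgebra.ι k (Sum.inr i))
  | dt (i j : Fin d) :
      WeylRel k d (FreeAlgebra.ι k (Sum.inr i) * FreeAlgebra.ι k (Sum.inl j))
        (FreeAlgebra.ι k (Sum.inl j) * FreeAlgebra.ι k (Sum.inr i) + if i = j then 1 else 0)

/-- The `d`-th Weyl algebra over `k`: the free algebra on `t_1,…,t_d,∂_1,…,∂_d` modulo the
two-sided ideal generated by the Weyl relations. -/
abbrev WeylAlgebra (k : Type*) [CommRing k] (d : ℕ) := RingQuot (WeylRel k d)

namespace WeylAlgebra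

variable (k : Type*) [CommRing k] (d : ℕ)

/-- The generator `t_i` of the Weyl algebra. -/
def t (i : Fin d) : WeylAlgebra k d :=
  RingQuot.mkAlgHom k (WeylRel k d) (FreeAlgebra.ι k (Sum.inl i))

/-- The generator `∂_i` of the Weyl algebra. -/
def del (i : Fin d) : WeylAlgebra k d :=
  RingQuot.mkAlgHom k (WeylRel k d) (FreeAlgebra.ι k (Sum.inr i))

/-- The monomial `t^I = t_1^{i_1} ⋯ t_d^{i_d}` in the Weyl algebra. -/
def monomialT (I : Fin d → ℕ) : WeylAlgebra k d :=
  ((List.finRange d).map fun i => t k d i ^ I i).prod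

/-- The monomial `∂^J = ∂_1^{j_1} ⋯ ∂_d^{j_d}` in the Weyl algebra. -/
def monomialD (J : Fin d → ℕ) : WeylAlgebra k d :=
  ((List.finRange d).map fun i => del k d i ^ J i).prod

end WeylAlgebra

/-!
Suppose `D X = X D + 1` in a ring where `p = 0`. The operators `c_j = -D^(p-1) X^(p-1-j)` satisfy
`∑_{j < p} X^j c_j = 1`, and `c_i X^j m = δ_ij m` for `i, j < p` whenever `D m = 0`. Among the
endomorphisms of `W` this applies to the pairs `(ad ∂_i, t_i)` and `(-ad t_i, ∂_i)`, whose second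
entry acts by left multiplication: as `∂_i^p` and `t_i^p` are central, every `x` is uniquely
`∑_I t^I a_I(x)` with the `a_I(x)` commuting with all `∂_i`, and uniquely `∑_J ∂^J b_J(x)` with
`b_J(x) ∈ A`. Using both expansions, `W` is free over its center on the monomials `t^I ∂^J`.

The map `b_J` is a polynomial in left multiplications and in right multiplications by the `t_i ∈ A`,
so a right `A`-linear map `g`, being `x ↦ ∑_J g(∂^J) b_J(x)`, comes from `W ⊗ A`; expanding the left
factors over the center gives the normal form `x ↦ ∑ t^I ∂^J x c_{I,J}`. Its coefficients are
recovered by the same extraction inside `End W`, where right multiplication by `c_{I,J}` commutes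
with left multiplication by `∂_i` and `t_i`.
-/

open scoped Nat TensorProduct

section PrimeCharacteristic

variable {R : Type*} [Ring R] {p : ℕ}

theorem natCast_factorial_pred_eq_neg_one (hp : p.Prime) (hR : (p : R) = 0) :
    ((p - 1)! : R) = -1 := by
  nontriviality R
  have : Fact p.Prime := ⟨hp⟩
  have : CharP R p := (CharP.charP_iff_prime_eq_zero hp).2 hR
  have := congrArg (ZMod.castHom dvd_rfl R) (ZMod.wilsons_lemma p)
  rwa [map_natCast, map_neg, map_one] at this

theorem natCast_choose_pred (hp : p.Prime) (hR : (p : R) = 0) {j : ℕ} (hj : j < p) :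
    ((p - 1).choose j : R) = (-1) ^ j := by
  induction j with
  | zero => simp
  | succ j ih =>
    have pascal : p.choose (j + 1) = (p - 1).choose j + (p - 1).choose (j + 1) := by
      rw [← Nat.choose_succ_succ', Nat.sub_add_cancel hp.one_le]
    have choose_eq_zero : (p.choose (j + 1) : R) = 0 := by
      obtain ⟨q, hq⟩ := hp.dvd_choose_self j.succ_ne_zero hj
      rw [hq, Nat.cast_mul, hR, zero_mul]
    rw [pascal, Nat.cast_add, ih (by lia)] at choose_eq_zero
    rw [pow_succ, mul_neg_one]
    exact eq_neg_of_add_eq_zero_right choose_eq_zero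

theorem sub_pow_pred_of_commute (hp : p.Prime) (hR : (p : R) = 0) {x y : R} (h : Commute x y) :
    (x - y) ^ (p - 1) = ∑ j ∈ Finset.range p, y ^ j * x ^ (p - 1 - j) := by
  rw [sub_eq_neg_add, h.symm.neg_left.add_pow, Nat.sub_add_cancel hp.one_le]
  refine Finset.sum_congr rfl fun j hj => ?_
  rw [natCast_choose_pred hp hR (Finset.mem_range.1 hj), neg_pow y j,
    ← ((Commute.neg_one_left _).pow_left j).eq, ← mul_assoc, ← mul_assoc, ← pow_add,
    Even.neg_one_pow ⟨j, rfl⟩, one_mul]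

theorem sub_pow_prime_of_commute (hp : p.Prime) (hR : (p : R) = 0) {x y : R} (h : Commute x y) :
    (x - y) ^ p = x ^ p - y ^ p := by
  nontriviality R
  have : Fact p.Prime := ⟨hp⟩
  have : CharP R p := (CharP.charP_iff_prime_eq_zero hp).2 hR
  exact sub_pow_char_of_commute p h

end PrimeCharacteristic

section InnerDerivation

variable (k : Type*) [CommRing k] {R : Type*} [Ring R] [Algebra k R]

/-- The inner derivation `x ↦ a x - x a` of an associative algebra, written `ad a` in the comments.
Mathlib's `LieAlgebra.ad` needs the commutator Lie ring, which is not a global instance. -/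
def innerDerivation (a : R) : Module.End k R :=
  LinearMap.mulLeft k a - LinearMap.mulRight k a

theorem innerDerivation_apply_eq_zero_iff {a x : R} :
    innerDerivation k a x = 0 ↔ Commute a x :=
  sub_eq_zero

theorem innerDerivation_mul_mulLeft (a b : R) :
    innerDerivation k a * LinearMap.mulLeft k b =
      LinearMap.mulLeft k b * innerDerivation k a + LinearMap.mulLeft k (a * b - b * a) := by
  ext x
  simp only [innerDerivation, Module.End.mul_apply, LinearMap.add_apply, LinearMap.sub_apply,
    LinearMap.mulLeft_apply, LinearMap.mulRight_apply]
  noncomm_ring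

theorem innerDerivation_mul_innerDerivation (a b : R) :
    innerDerivation k a * innerDerivation k b =
      innerDerivation k b * innerDerivation k a + innerDerivation k (a * b - b * a) := by
  ext x
  simp only [innerDerivation, Module.End.mul_apply, LinearMap.add_apply, LinearMap.sub_apply,
    LinearMap.mulLeft_apply, LinearMap.mulRight_apply]
  noncomm_ring

theorem innerDerivation_eq_zero {a : R} (ha : ∀ x, Commute a x) : innerDerivation k a = 0 :=
  LinearMap.ext fun x => (innerDerivation_apply_eq_zero_iff k).2 (ha x)

theorem natCast_moduleEnd_eq_zero {n : ℕ} (hR : (n : R) = 0) : (n : Module.End k R) = 0 := by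
  ext x
  rw [Module.End.natCast_apply, nsmul_eq_mul, hR, zero_mul, LinearMap.zero_apply]

theorem innerDerivation_pow_prime {p : ℕ} (hp : p.Prime) (hR : (p : R) = 0) (a : R) :
    innerDerivation k a ^ p = innerDerivation k (a ^ p) := by
  rw [innerDerivation, sub_pow_prime_of_commute hp (natCast_moduleEnd_eq_zero k hR)
    (LinearMap.commute_mulLeft_right a a), LinearMap.pow_mulLeft, LinearMap.pow_mulRight]
  rfl

end InnerDerivation

section CanonicalPair

variable {R M : Type*} [Ring R] [AddCommGroup M] [Module R M] {p : ℕ} {D X : R}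

theorem mul_pow_of_mul_eq_mul_add_one (h : D * X = X * D + 1) (n : ℕ) :
    D * X ^ n = X ^ n * D + n * X ^ (n - 1) := by
  induction n with
  | zero => simp
  | succ n ih =>
    calc D * X ^ (n + 1) = X ^ n * (D * X) + n * (X ^ (n - 1) * X) := by
          rw [pow_succ, ← mul_assoc, ih, add_mul]; noncomm_ring
      _ = X ^ (n + 1) * D + (X ^ n + n * (X ^ (n - 1) * X)) := by
          rw [h, pow_succ]; noncomm_ring
      _ = X ^ (n + 1) * D + (n + 1 : ℕ) * X ^ (n + 1 - 1) := by
          rcases n with _ | n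
          · simp
          · rw [Nat.add_sub_cancel, Nat.add_sub_cancel, ← pow_succ, Nat.cast_add_one (n + 1),
              add_mul, one_mul, add_comm (X ^ (n + 1))]

theorem pow_smul_pow_smul (h : D * X = X * D + 1) {m : M} (hm : D • m = 0) (n r : ℕ) :
    D ^ n • X ^ r • m = r.descFactorial n • X ^ (r - n) • m := by
  have lower (s : ℕ) : D • X ^ s • m = s • X ^ (s - 1) • m := by
    rw [← mul_smul, mul_pow_of_mul_eq_mul_add_one h, add_smul, mul_smul, hm, smul_zero, zero_add,
      mul_smul, Nat.cast_smul_eq_nsmul]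
  induction n with
  | zero => simp
  | succ n ih =>
    rw [pow_succ', mul_smul, ih, smul_comm, lower, smul_smul, Nat.sub_sub, mul_comm,
      Nat.descFactorial_succ]

/-- With respect to a pair with `D X = X D + 1` in characteristic `p`, the operator extracting
`m_j` from `∑_{i < p} X^i m_i` when `D` kills every `m_i`. The sign is `1 / (p - 1)! = -1`. -/
def coeffOp (p : ℕ) (D X : R) (j : ℕ) : R :=
  -(D ^ (p - 1) * X ^ (p - 1 - j))

-- On the endomorphisms of `R`, the pair `(ad (-X), D)` satisfies the same relation, and
-- `(ad (-X)) ^ (p - 1)` expands without signs in characteristic `p`; evaluate it at `D ^ (p - 1)`.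
theorem sum_pow_mul_coeffOp (hp : p.Prime) (hR : (p : R) = 0) (h : D * X = X * D + 1) :
    ∑ j : Fin p, X ^ (j : ℕ) * coeffOp p D X j = 1 := by
  have hEnd := natCast_moduleEnd_eq_zero ℤ hR
  have ad_pair : innerDerivation ℤ (-X) * LinearMap.mulLeft ℤ D =
      LinearMap.mulLeft ℤ D * innerDerivation ℤ (-X) + 1 := by
    have : -X * D - D * -X = 1 := by rw [mul_neg, h]; noncomm_ring
    rw [innerDerivation_mul_mulLeft, this, LinearMap.mulLeft_one]
    rfl
  have ad_one : innerDerivation ℤ (-X) • (1 : R) = 0 :=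
    (innerDerivation_apply_eq_zero_iff ℤ).2 (Commute.one_right _)
  have value : (innerDerivation ℤ (-X) ^ (p - 1)) (D ^ (p - 1)) = -1 := by
    have := pow_smul_pow_smul ad_pair ad_one (p - 1) (p - 1)
    simpa [Nat.descFactorial_self, LinearMap.pow_mulLeft,
      natCast_factorial_pred_eq_neg_one hp hR] using this
  have expansion : (innerDerivation ℤ (-X) ^ (p - 1)) (D ^ (p - 1)) =
      ∑ j ∈ Finset.range p, X ^ j * (D ^ (p - 1) * X ^ (p - 1 - j)) := by
    have : innerDerivation ℤ (-X) = LinearMap.mulRight ℤ X - LinearMap.mulLeft ℤ X := by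
      ext x
      simp only [innerDerivation, LinearMap.sub_apply, LinearMap.mulLeft_apply,
        LinearMap.mulRight_apply, neg_mul, mul_neg]
      abel
    rw [this, sub_pow_pred_of_commute hp hEnd (LinearMap.commute_mulLeft_right X X).symm]
    simp [LinearMap.pow_mulLeft, LinearMap.pow_mulRight]
  rw [Fin.sum_univ_eq_sum_range fun j => X ^ j * coeffOp p D X j]
  simp only [coeffOp, mul_neg, Finset.sum_neg_distrib]
  rw [← expansion, value, neg_neg]

theorem coeffOp_smul_pow_smul (hp : p.Prime) (hR : (p : R) = 0) (h : D * X = X * D + 1) {m : M}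
    (hm : D • m = 0) {i j : ℕ} (hi : i < p) (hj : j < p) :
    coeffOp p D X i • X ^ j • m = (if i = j then 1 else 0 : ℕ) • m := by
  have := pow_smul_pow_smul h hm (p - 1) (p - 1 - i + j)
  rw [coeffOp, neg_smul, mul_smul, ← mul_smul (X ^ _), ← pow_add, this]
  rcases lt_trichotomy i j with hij | rfl | hij
  · have : p ∣ (p - 1 - i + j).descFactorial (p - 1) := by
      rw [Nat.descFactorial_eq_prod_range]
      have factor_mem : j - i - 1 ∈ Finset.range (p - 1) := Finset.mem_range.2 (by lia)
      refine dvd_trans ?_ (Finset.dvd_prod_of_mem _ factor_mem)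
      rw [show p - 1 - i + j - (j - i - 1) = p by lia]
    obtain ⟨q, hq⟩ := this
    rw [if_neg hij.ne, hq, mul_comm, mul_smul, ← Nat.cast_smul_eq_nsmul R p, hR]
    simp
  · rw [Nat.sub_add_cancel (by lia), Nat.descFactorial_self, ← Nat.cast_smul_eq_nsmul R,
      natCast_factorial_pred_eq_neg_one hp hR]
    simp
  · rw [if_neg hij.ne', Nat.descFactorial_of_lt (by lia)]
    simp

end CanonicalPair

section OrderedProduct

variable {R : Type*} {d : ℕ}

theorem commute_prod_ofFn [Monoid R] {a : R} {f : Fin d → R} (h : ∀ i, Commute a (f i)) :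
    Commute a (List.ofFn f).prod :=
  Commute.list_prod_right _ _ (List.forall_mem_ofFn_iff.2 h)

theorem prod_ofFn_mul_prod_ofFn [Monoid R] {f g : Fin d → R}
    (h : Pairwise fun i j => Commute (f i) (g j)) :
    (List.ofFn f).prod * (List.ofFn g).prod = (List.ofFn fun i => f i * g i).prod := by
  induction d with
  | zero => simp
  | succ d ih =>
    have head_comm : Commute (g 0) (List.ofFn fun i : Fin d => f i.succ).prod :=
      commute_prod_ofFn fun i => (h i.succ_ne_zero).symm
    have tail_comm : Pairwise fun i j : Fin d => Commute (f i.succ) (g j.succ) :=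
      fun i j hij => h ((Fin.succ_injective d).ne hij)
    simp only [List.ofFn_succ, List.prod_cons]
    rw [← ih tail_comm, mul_assoc, ← mul_assoc _ (g 0), ← head_comm.eq]
    simp only [mul_assoc]

theorem mul_prod_ofFn_eq_zero [MonoidWithZero R] {a : R} {f : Fin d → R} {i : Fin d}
    (hi : a * f i = 0) (h : ∀ j, i ≠ j → Commute a (f j)) : a * (List.ofFn f).prod = 0 := by
  induction d with
  | zero => exact i.elim0
  | succ d ih =>
    rw [List.ofFn_succ, List.prod_cons, ← mul_assoc]
    cases i using Fin.cases with
    | zero => rw [hi, zero_mul]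
    | succ i =>
      rw [(h 0 i.succ_ne_zero).eq, mul_assoc,
        ih hi fun j hij => h j.succ ((Fin.succ_injective d).ne hij), mul_zero]

theorem sum_prod_ofFn [Ring R] {ι : Type*} [Fintype ι] (f : Fin d → ι → R) :
    ∑ J : Fin d → ι, (List.ofFn fun i => f i (J i)).prod =
      (List.ofFn fun i => ∑ j, f i j).prod := by
  simpa only [MultilinearMap.mkPiAlgebraFin_apply] using
    ((MultilinearMap.mkPiAlgebraFin ℤ d R).map_sum f).symm

theorem prod_ofFn_smul [Semiring R] {M : Type*} [AddCommMonoid M] [Module R M] {f : Fin d → R}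
    {n : Fin d → ℕ} {m : M} (h : ∀ i, f i • m = n i • m) :
    (List.ofFn f).prod • m = (∏ i, n i) • m := by
  induction d with
  | zero => simp
  | succ d ih =>
    rw [List.ofFn_succ, List.prod_cons, mul_smul, ih fun i => h i.succ, smul_comm, h, smul_smul,
      Fin.prod_univ_succ, mul_comm]

/-- The monomial `X_1^{j_1} ⋯ X_d^{j_d}`, multiplied in this order, all exponents being less
than `p`. -/
def reducedMonomial [Monoid R] {p : ℕ} (X : Fin d → R) (J : Fin d → Fin p) : R :=
  (List.ofFn fun i => X i ^ (J i : ℕ)).prod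

theorem map_reducedMonomial {S F : Type*} [Monoid R] [Monoid S] [FunLike F R S]
    [MonoidHomClass F R S] (f : F) {p : ℕ} (X : Fin d → R) (J : Fin d → Fin p) :
    f (reducedMonomial X J) = reducedMonomial (fun i => f (X i)) J := by
  simp [reducedMonomial, map_list_prod, List.map_ofFn, Function.comp_def]

end OrderedProduct

/-- The elements `D_1, …, D_d` and `X_1, …, X_d` of a ring satisfy the canonical commutation
relations of the Weyl algebra, with `D_i` in the role of `∂_i` and `X_i` in that of `t_i`. -/
structure CanonicalCommutation {R : Type*} [Ring R] {d : ℕ} (D X : Fin d → R) : Prop where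
  commute_left : ∀ i j, Commute (D i) (D j)
  commute_right : ∀ i j, Commute (X i) (X j)
  mul_eq : ∀ i j, D i * X j = X j * D i + if i = j then 1 else 0

/-- The product over `i` of the operators `coeffOp p (D i) (X i) (J i)`; it extracts `m_J` from
`∑_J X^J m_J` when every `D i` kills every `m_J`. -/
def coeffProj {R : Type*} [Ring R] {d p : ℕ} (D X : Fin d → R) (J : Fin d → Fin p) : R :=
  (List.ofFn fun i => coeffOp p (D i) (X i) (J i)).prod

theorem coeffProj_mem {R σ : Type*} [Ring R] [SetLike σ R] [SubringClass σ R] {S : σ} {d p : ℕ}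
    {D X : Fin d → R} (hD : ∀ i, D i ∈ S) (hX : ∀ i, X i ∈ S) (J : Fin d → Fin p) :
    coeffProj D X J ∈ S :=
  list_prod_mem (List.forall_mem_ofFn_iff.2 fun i =>
    neg_mem (mul_mem (pow_mem (hD i) _) (pow_mem (hX i) _)))

namespace CanonicalCommutation

variable {R : Type*} [Ring R] {d p : ℕ} {D X : Fin d → R}

theorem mul_eq_self (h : CanonicalCommutation D X) (i : Fin d) : D i * X i = X i * D i + 1 := by
  rw [h.mul_eq, if_pos rfl]

theorem commute_of_ne (h : CanonicalCommutation D X) {i j : Fin d} (hij : i ≠ j) :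
    Commute (D i) (X j) := by
  rw [Commute, SemiconjBy, h.mul_eq, if_neg hij, add_zero]

theorem swap (h : CanonicalCommutation D X) : CanonicalCommutation (-X) D where
  commute_left i j := ((h.commute_right i j).neg_left).neg_right
  commute_right := h.commute_left
  mul_eq i j := by
    simp only [Pi.neg_apply, neg_mul, mul_neg, h.mul_eq j i, eq_comm (a := i)]
    abel

theorem map {S F : Type*} [Ring S] [FunLike F R S] [RingHomClass F R S]
    (h : CanonicalCommutation D X) (f : F) :
    CanonicalCommutation (fun i => f (D i)) (fun i => f (X i)) where
  commute_left i j := (h.commute_left i j).map f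
  commute_right i j := (h.commute_right i j).map f
  mul_eq i j := by
    rw [← map_mul, h.mul_eq, map_add, map_mul, apply_ite f, map_one, map_zero]

theorem commute_pow_right (h : CanonicalCommutation D X) (hR : (p : R) = 0) (i j : Fin d) :
    Commute (D i) (X j ^ p) := by
  obtain rfl | hij := eq_or_ne i j
  · rw [Commute, SemiconjBy, mul_pow_of_mul_eq_mul_add_one (h.mul_eq_self i), hR, zero_mul,
      add_zero]
  · exact (h.commute_of_ne hij).pow_right p

theorem commute_coeffProj {a : R} (hD : ∀ i, Commute a (D i)) (hX : ∀ i, Commute a (X i))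
    (J : Fin d → Fin p) : Commute a (coeffProj D X J) :=
  commute_prod_ofFn fun i => (((hD i).pow_right _).mul_right ((hX i).pow_right _)).neg_right

theorem mul_coeffProj (h : CanonicalCommutation D X) (hp : p.Prime) {i : Fin d}
    (hD : D i ^ p = 0) (J : Fin d → Fin p) : D i * coeffProj D X J = 0 := by
  refine mul_prod_ofFn_eq_zero (i := i) ?_ fun j hij => ?_
  · rw [coeffOp, mul_neg, ← mul_assoc, ← pow_succ', Nat.sub_add_cancel hp.one_le, hD, zero_mul,
      neg_zero]
  · exact (((h.commute_left i j).pow_right _).mul_right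
      ((h.commute_of_ne hij).pow_right _)).neg_right

theorem sum_reducedMonomial_mul_coeffProj (h : CanonicalCommutation D X) (hp : p.Prime)
    (hR : (p : R) = 0) : ∑ J : Fin d → Fin p, reducedMonomial X J * coeffProj D X J = 1 := by
  have factor (J : Fin d → Fin p) : reducedMonomial X J * coeffProj D X J =
      (List.ofFn fun i => X i ^ (J i : ℕ) * coeffOp p (D i) (X i) (J i)).prod :=
    prod_ofFn_mul_prod_ofFn fun i j hij => Commute.pow_left
      (((h.commute_of_ne hij.symm).symm.pow_right _).mul_right
        ((h.commute_right i j).pow_right _)).neg_right _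
  simp only [factor]
  rw [sum_prod_ofFn fun i (j : Fin p) => X i ^ (j : ℕ) * coeffOp p (D i) (X i) j]
  simp [sum_pow_mul_coeffOp hp hR (h.mul_eq_self _)]

theorem coeffProj_smul_reducedMonomial_smul (h : CanonicalCommutation D X) (hp : p.Prime)
    (hR : (p : R) = 0) {M : Type*} [AddCommGroup M] [Module R M] {m : M} (hm : ∀ i, D i • m = 0)
    (J K : Fin d → Fin p) :
    coeffProj D X J • reducedMonomial X K • m = if J = K then m else 0 := by
  have factor : coeffProj D X J * reducedMonomial X K =
      (List.ofFn fun i => coeffOp p (D i) (X i) (J i) * X i ^ (K i : ℕ)).prod :=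
    prod_ofFn_mul_prod_ofFn fun i j hij => Commute.pow_right
      (((h.commute_of_ne hij).pow_left _).mul_left ((h.commute_right i j).pow_left _)).neg_left _
  have kronecker (i : Fin d) : (coeffOp p (D i) (X i) (J i) * X i ^ (K i : ℕ)) • m =
      (if J i = K i then 1 else 0 : ℕ) • m := by
    simpa only [mul_smul, Fin.val_inj] using
      coeffOp_smul_pow_smul hp hR (h.mul_eq_self i) (hm i) (J i).isLt (K i).isLt
  rw [← mul_smul, factor, prod_ofFn_smul kronecker, Fintype.prod_ite_zero, Finset.prod_const_one]
  simp only [funext_iff, ite_smul, one_smul, zero_smul]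

end CanonicalCommutation

section Coefficients

variable (k : Type*) [CommRing k] {R : Type*} [Ring R] [Algebra k R] {d p : ℕ} {D X : Fin d → R}

/-- The coefficient of `X^J` in an expansion `∑_J X^J a_J` whose coefficients `a_J` commute with
every `D i`, as an operator on the ring. -/
def monomialCoeff (D X : Fin d → R) (J : Fin d → Fin p) : Module.End k R :=
  coeffProj (fun i => innerDerivation k (D i)) (fun i => LinearMap.mulLeft k (X i)) J

theorem reducedMonomial_mulLeft (X : Fin d → R) (J : Fin d → Fin p) :
    reducedMonomial (fun i => LinearMap.mulLeft k (X i)) J =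
      LinearMap.mulLeft k (reducedMonomial X J) :=
  (map_reducedMonomial (Algebra.lmul k R) X J).symm

namespace CanonicalCommutation

theorem mul_sub_mul (h : CanonicalCommutation D X) (i j : Fin d) :
    D i * X j - X j * D i = if i = j then 1 else 0 := by
  rw [h.mul_eq, add_sub_cancel_left]

theorem innerDerivation_mulLeft (h : CanonicalCommutation D X) :
    CanonicalCommutation (fun i => innerDerivation k (D i))
      (fun i => LinearMap.mulLeft k (X i)) where
  commute_left i j := by
    rw [Commute, SemiconjBy, innerDerivation_mul_innerDerivation, (h.commute_left i j).eq, sub_self,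
      innerDerivation_eq_zero k (a := 0) Commute.zero_left, add_zero]
  commute_right i j := by
    rw [Commute, SemiconjBy, Module.End.mul_eq_comp, Module.End.mul_eq_comp,
      ← LinearMap.mulLeft_mul, ← LinearMap.mulLeft_mul, (h.commute_right i j).eq]
  mul_eq i j := by
    rw [innerDerivation_mul_mulLeft, h.mul_sub_mul]
    split_ifs
    · rw [LinearMap.mulLeft_one]; rfl
    · rw [LinearMap.mulLeft_zero_eq_zero]

theorem sum_reducedMonomial_mul_monomialCoeff (h : CanonicalCommutation D X) (hp : p.Prime)
    (hR : (p : R) = 0) (x : R) :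
    ∑ J : Fin d → Fin p, reducedMonomial X J * monomialCoeff k D X J x = x := by
  have := congrArg (· x) ((h.innerDerivation_mulLeft k).sum_reducedMonomial_mul_coeffProj hp
    (natCast_moduleEnd_eq_zero k hR))
  simpa [reducedMonomial_mulLeft, monomialCoeff]
    using this

theorem commute_left_monomialCoeff (h : CanonicalCommutation D X) (hp : p.Prime) (hR : (p : R) = 0)
    (hD : ∀ i y, Commute (D i ^ p) y) (i : Fin d) (J : Fin d → Fin p) (x : R) :
    Commute (D i) (monomialCoeff k D X J x) := by
  have pow_eq_zero : innerDerivation k (D i) ^ p = 0 := by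
    rw [innerDerivation_pow_prime k hp hR, innerDerivation_eq_zero k (hD i)]
  rw [← innerDerivation_apply_eq_zero_iff k]
  exact LinearMap.congr_fun ((h.innerDerivation_mulLeft k).mul_coeffProj hp pow_eq_zero J) x

theorem commute_right_monomialCoeff (h : CanonicalCommutation D X) {i : Fin d} {x : R}
    (hx : Commute (X i) x) (J : Fin d → Fin p) : Commute (X i) (monomialCoeff k D X J x) := by
  have comm : Commute (innerDerivation k (X i)) (monomialCoeff k D X J) := by
    refine commute_coeffProj (fun j => ?_) (fun j => ?_) J
    · have central (y : R) : Commute (X i * D j - D j * X i) y := by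
        rw [← neg_sub, h.mul_sub_mul]
        split_ifs
        exacts [(Commute.one_left y).neg_left, (Commute.zero_left y).neg_left]
      rw [Commute, SemiconjBy, innerDerivation_mul_innerDerivation,
        innerDerivation_eq_zero k central, add_zero]
    · rw [Commute, SemiconjBy, innerDerivation_mul_mulLeft, (h.commute_right i j).eq, sub_self,
        LinearMap.mulLeft_zero_eq_zero, add_zero]
  rw [← innerDerivation_apply_eq_zero_iff k] at hx ⊢
  rw [← Module.End.mul_apply, comm.eq, Module.End.mul_apply, hx, map_zero]

theorem monomialCoeff_sum (h : CanonicalCommutation D X) (hp : p.Prime) (hR : (p : R) = 0)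
    {a : (Fin d → Fin p) → R} (ha : ∀ J i, Commute (D i) (a J)) (J : Fin d → Fin p) :
    monomialCoeff k D X J (∑ K, reducedMonomial X K * a K) = a J := by
  have term (K : Fin d → Fin p) :
      monomialCoeff k D X J (reducedMonomial X K * a K) = if J = K then a K else 0 := by
    have := (h.innerDerivation_mulLeft k).coeffProj_smul_reducedMonomial_smul hp
      (natCast_moduleEnd_eq_zero k hR)
      (fun i => (innerDerivation_apply_eq_zero_iff k).2 (ha K i)) J K
    simpa [reducedMonomial_mulLeft, monomialCoeff] using this
  simp [term]

theorem monomialCoeff_monomialCoeff_sum (h : CanonicalCommutation D X) (hp : p.Prime)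
    (hR : (p : R) = 0) {c : (Fin d → Fin p) × (Fin d → Fin p) → R}
    (hD : ∀ IJ i, Commute (D i) (c IJ)) (hX : ∀ IJ i, Commute (X i) (c IJ))
    (I J : Fin d → Fin p) :
    monomialCoeff k (-X) D J (monomialCoeff k D X I
      (∑ IJ, reducedMonomial X IJ.1 * reducedMonomial D IJ.2 * c IJ)) = c (I, J) := by
  have inner_commute (I : Fin d → Fin p) (i : Fin d) :
      Commute (D i) (∑ J, reducedMonomial D J * c (I, J)) :=
    Commute.sum_right _ _ _ fun J _ => (commute_prod_ofFn fun j =>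
      (h.commute_left i j).pow_right _).mul_right (hD _ i)
  simp only [Fintype.sum_prod_type, mul_assoc, ← Finset.mul_sum]
  rw [h.monomialCoeff_sum k hp hR inner_commute,
    h.swap.monomialCoeff_sum k hp hR fun J i => (hX (I, J) i).neg_left]

theorem eq_of_sum_mul_mul_eq (h : CanonicalCommutation D X) (hp : p.Prime) (hR : (p : R) = 0)
    {c c' : (Fin d → Fin p) × (Fin d → Fin p) → R}
    (hc : ∀ x, ∑ IJ, reducedMonomial X IJ.1 * reducedMonomial D IJ.2 * x * c IJ =
      ∑ IJ, reducedMonomial X IJ.1 * reducedMonomial D IJ.2 * x * c' IJ) : c = c' := by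
  let LD (i : Fin d) := LinearMap.mulLeft ℤ (D i)
  let LX (i : Fin d) := LinearMap.mulLeft ℤ (X i)
  let operator (c : (Fin d → Fin p) × (Fin d → Fin p) → R) : Module.End ℤ R :=
    ∑ IJ, reducedMonomial LX IJ.1 * reducedMonomial LD IJ.2 * LinearMap.mulRight ℤ (c IJ)
  have operator_eq : operator c = operator c' := LinearMap.ext fun x => by
    simpa [operator, LD, LX, reducedMonomial_mulLeft, mul_assoc] using hc x
  have recover (c : (Fin d → Fin p) × (Fin d → Fin p) → R) (I J : Fin d → Fin p) :
      monomialCoeff ℤ (-LX) LD J (monomialCoeff ℤ LD LX I (operator c)) =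
        LinearMap.mulRight ℤ (c (I, J)) :=
    (h.map (Algebra.lmul ℤ R)).monomialCoeff_monomialCoeff_sum ℤ hp
      (natCast_moduleEnd_eq_zero ℤ hR)
      (fun IJ i => LinearMap.commute_mulLeft_right (D i) (c IJ))
      (fun IJ i => LinearMap.commute_mulLeft_right (X i) (c IJ)) I J
  funext ⟨I, J⟩
  have mulRight_eq : LinearMap.mulRight ℤ (c (I, J)) = LinearMap.mulRight ℤ (c' (I, J)) := by
    rw [← recover c, operator_eq, recover c']
  simpa using LinearMap.congr_fun mulRight_eq 1

end CanonicalCommutation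

end Coefficients

section Generated

variable {k : Type*} [CommRing k] {R : Type*} [Ring R] [Algebra k R] {d p : ℕ} {D X : Fin d → R}

theorem mem_centralizer_adjoin_range_iff {a : R} :
    a ∈ Subalgebra.centralizer k (Algebra.adjoin k (Set.range X) : Set R) ↔
      ∀ i, Commute (X i) a := by
  refine ⟨fun ha i => ha _ (Algebra.subset_adjoin ⟨i, rfl⟩), fun ha y hy => ?_⟩
  exact (Algebra.commute_of_mem_adjoin_of_forall_mem_commute hy
    (Set.forall_mem_range.2 fun i => (ha i).symm)).symm

theorem commute_of_adjoin_union_range_eq_top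
    (hgen : Algebra.adjoin k (Set.range D ∪ Set.range X) = ⊤) {z : R}
    (hD : ∀ i, Commute z (D i)) (hX : ∀ i, Commute z (X i)) (y : R) : Commute z y := by
  refine Algebra.commute_of_mem_adjoin_of_forall_mem_commute (hgen ▸ Algebra.mem_top) ?_
  rintro _ (⟨i, rfl⟩ | ⟨i, rfl⟩)
  exacts [hD i, hX i]

namespace CanonicalCommutation

theorem central_left_pow (h : CanonicalCommutation D X) (hR : (p : R) = 0)
    (hgen : Algebra.adjoin k (Set.range D ∪ Set.range X) = ⊤) (i : Fin d) (y : R) :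
    Commute (D i ^ p) y :=
  commute_of_adjoin_union_range_eq_top hgen (fun j => (h.commute_left i j).pow_left p)
    (fun j => Commute.neg_right_iff.1 (h.swap.commute_pow_right hR j i).symm) y

theorem central_right_pow (h : CanonicalCommutation D X) (hR : (p : R) = 0)
    (hgen : Algebra.adjoin k (Set.range D ∪ Set.range X) = ⊤) (i : Fin d) (y : R) :
    Commute (X i ^ p) y :=
  commute_of_adjoin_union_range_eq_top hgen (fun j => (h.commute_pow_right hR j i).symm)
    (fun j => (h.commute_right i j).pow_left p) y

theorem commute_right_monomialCoeff_swap (h : CanonicalCommutation D X) (hp : p.Prime)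
    (hR : (p : R) = 0) (hgen : Algebra.adjoin k (Set.range D ∪ Set.range X) = ⊤) (i : Fin d)
    (J : Fin d → Fin p) (x : R) : Commute (X i) (monomialCoeff k (-X) D J x) := by
  refine Commute.neg_left_iff.1 (h.swap.commute_left_monomialCoeff k hp hR (fun j y => ?_) i J x)
  rw [Pi.neg_apply, neg_pow]
  exact ((Commute.neg_one_left y).pow_left p).mul_left (h.central_right_pow hR hgen j y)

theorem exists_eq_sum_central (h : CanonicalCommutation D X) (hp : p.Prime) (hR : (p : R) = 0)
    (hgen : Algebra.adjoin k (Set.range D ∪ Set.range X) = ⊤) (w : R) :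
    ∃ z : (Fin d → Fin p) × (Fin d → Fin p) → R, (∀ IJ, z IJ ∈ Subalgebra.center k R) ∧
      w = ∑ IJ, reducedMonomial X IJ.1 * reducedMonomial D IJ.2 * z IJ := by
  refine ⟨fun IJ => monomialCoeff k (-X) D IJ.2 (monomialCoeff k D X IJ.1 w), fun IJ => ?_, ?_⟩
  · have commute_D (i : Fin d) := h.swap.commute_right_monomialCoeff k
      (h.commute_left_monomialCoeff k hp hR (h.central_left_pow hR hgen) i IJ.1 w) IJ.2
    have commute_X (i : Fin d) :=
      h.commute_right_monomialCoeff_swap hp hR hgen i IJ.2 (monomialCoeff k D X IJ.1 w)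
    exact Subalgebra.mem_center_iff.2 fun y => (commute_of_adjoin_union_range_eq_top hgen
      (fun i => (commute_D i).symm) (fun i => (commute_X i).symm) y).symm
  · simp only [Fintype.sum_prod_type, mul_assoc, ← Finset.mul_sum,
      h.swap.sum_reducedMonomial_mul_monomialCoeff k hp hR,
      h.sum_reducedMonomial_mul_monomialCoeff k hp hR]

end CanonicalCommutation

section Sandwich

/-- The natural map `δ ⊗ a ↦ (x ↦ δ x a)` from `R ⊗ A` to the endomorphisms of `R`. The tensor
product is taken over `k` rather than over the center, which does not change the image. -/
def sandwich (A : Subalgebra k R) : R ⊗[k] A.op →ₐ[k] Module.End k R :=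
  (AlgHom.mulLeftRight k R).comp (Algebra.TensorProduct.map (AlgHom.id k R) A.op.val)

variable {A : Subalgebra k R}

theorem sandwich_tmul_apply (u : R) (a : A.op) (x : R) :
    sandwich A (u ⊗ₜ a) x = u * x * (a : Rᵐᵒᵖ).unop := by
  simp [sandwich]

theorem mulLeft_mem_range_sandwich (u : R) : LinearMap.mulLeft k u ∈ (sandwich A).range :=
  ⟨u ⊗ₜ 1, LinearMap.ext fun x => by simp [sandwich]⟩

theorem mulRight_mem_range_sandwich {a : R} (ha : a ∈ A) :
    LinearMap.mulRight k a ∈ (sandwich A).range :=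
  ⟨1 ⊗ₜ ⟨MulOpposite.op a, ha⟩, LinearMap.ext fun x => by simp [sandwich]⟩

theorem monomialCoeff_mem_range_sandwich (hD : ∀ i, D i ∈ A) (J : Fin d → Fin p) :
    monomialCoeff k D X J ∈ (sandwich A).range :=
  coeffProj_mem (fun i => sub_mem (mulLeft_mem_range_sandwich (D i))
    (mulRight_mem_range_sandwich (hD i))) (fun i => mulLeft_mem_range_sandwich (X i)) J

namespace CanonicalCommutation

theorem exists_eq_sum_of_mem_range_sandwich (h : CanonicalCommutation D X) (hp : p.Prime)
    (hR : (p : R) = 0) (hgen : Algebra.adjoin k (Set.range D ∪ Set.range X) = ⊤)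
    (hA : Subalgebra.center k R ≤ A) {f : Module.End k R} (hf : f ∈ (sandwich A).range) :
    ∃ c : (Fin d → Fin p) × (Fin d → Fin p) → A, ∀ x,
      f x = ∑ IJ, reducedMonomial X IJ.1 * reducedMonomial D IJ.2 * x * (c IJ : R) := by
  obtain ⟨w, rfl⟩ := hf
  change ∃ c : (Fin d → Fin p) × (Fin d → Fin p) → A, ∀ x, sandwich A w x = _
  induction w using TensorProduct.induction_on with
  | zero => exact ⟨0, fun x => by simp⟩
  | add u v hu hv =>
    obtain ⟨c, hc⟩ := hu
    obtain ⟨c', hc'⟩ := hv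
    exact ⟨c + c', fun x => by simp [hc, hc', mul_add, Finset.sum_add_distrib]⟩
  | tmul u a =>
    obtain ⟨z, hz, hu⟩ := h.exists_eq_sum_central hp hR hgen u
    refine ⟨fun IJ => ⟨z IJ * (a : Rᵐᵒᵖ).unop, mul_mem (hA (hz IJ)) (Subalgebra.mem_op.1 a.2)⟩,
      fun x => ?_⟩
    rw [sandwich_tmul_apply, hu, Finset.sum_mul, Finset.sum_mul]
    refine Finset.sum_congr rfl fun IJ _ => ?_
    rw [mul_assoc _ (z IJ) x, ← Subalgebra.mem_center_iff.1 (hz IJ) x]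
    simp only [mul_assoc]

theorem exists_mem_range_sandwich_eq (h : CanonicalCommutation D X) (hp : p.Prime)
    (hR : (p : R) = 0) (hgen : Algebra.adjoin k (Set.range D ∪ Set.range X) = ⊤)
    (hX : ∀ i, X i ∈ A) (hA : ∀ a, (∀ i, Commute (X i) a) → a ∈ A) {g : R →+ R}
    (hg : ∀ x, ∀ a ∈ A, g (x * a) = g x * a) : ∃ f ∈ (sandwich A).range, ∀ x, g x = f x := by
  refine ⟨∑ J : Fin d → Fin p, LinearMap.mulLeft k (g (reducedMonomial D J)) *
    monomialCoeff k (-X) D J, sum_mem fun J _ => mul_mem (mulLeft_mem_range_sandwich _)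
      (monomialCoeff_mem_range_sandwich (fun i => neg_mem (hX i)) J), fun x => ?_⟩
  have coeff_mem (J : Fin d → Fin p) : monomialCoeff k (-X) D J x ∈ A :=
    hA _ fun i => h.commute_right_monomialCoeff_swap hp hR hgen i J x
  conv_lhs => rw [← h.swap.sum_reducedMonomial_mul_monomialCoeff k hp hR x, map_sum]
  simp only [hg _ _ (coeff_mem _)]
  simp

end CanonicalCommutation

end Sandwich

end Generated

theorem weylAlgebra_tensor_centralizer_equiv_end_general {p : ℕ} (hp : p.Prime)
    {k : Type*} [CommRing k] (hchar : (p : k) = 0) {R : Type*} [Ring R] [Algebra k R] {d : ℕ}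
    {D X : Fin d → R} (h : CanonicalCommutation D X)
    (hgen : Algebra.adjoin k (Set.range D ∪ Set.range X) = ⊤) :
    ∀ g : R →+ R,
      (∀ x : R, ∀ a ∈ Subalgebra.centralizer k (Algebra.adjoin k (Set.range X) : Set R),
        g (x * a) = g x * a) →
      ∃! c : (Fin d → Fin p) × (Fin d → Fin p) →
          Subalgebra.centralizer k (Algebra.adjoin k (Set.range X) : Set R),
        ∀ x : R, g x = ∑ IJ,
          reducedMonomial X IJ.1 * reducedMonomial D IJ.2 * x * (c IJ : R) := by
  intro g hg
  have hR : (p : R) = 0 := by rw [← map_natCast (algebraMap k R), hchar, map_zero]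
  obtain ⟨f, hf, hgf⟩ := h.exists_mem_range_sandwich_eq hp hR hgen
    (fun i => mem_centralizer_adjoin_range_iff.2 fun j => h.commute_right j i)
    (fun _ => mem_centralizer_adjoin_range_iff.2) hg
  obtain ⟨c, hc⟩ := h.exists_eq_sum_of_mem_range_sandwich hp hR hgen
    (Subalgebra.center_le_centralizer k _) hf
  refine ⟨c, fun x => (hgf x).trans (hc x), fun c' hc' => ?_⟩
  have coe_eq := h.eq_of_sum_mul_mul_eq hp hR (c := fun IJ => (c' IJ : R))
    (c' := fun IJ => (c IJ : R)) fun x => (hc' x).symm.trans ((hgf x).trans (hc x))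
  exact funext fun IJ => Subtype.ext (congrFun coe_eq IJ)

namespace WeylAlgebra

theorem canonicalCommutation_del_t (k : Type*) [CommRing k] (d : ℕ) :
    CanonicalCommutation (del k d) (t k d) where
  commute_left i j := by
    simpa only [map_mul, del, t, Commute, SemiconjBy] using
      RingQuot.mkAlgHom_rel k (WeylRel.dd (k := k) i j)
  commute_right i j := by
    simpa only [map_mul, del, t, Commute, SemiconjBy] using
      RingQuot.mkAlgHom_rel k (WeylRel.tt (k := k) i j)
  mul_eq i j := by
    have := RingQuot.mkAlgHom_rel k (WeylRel.dt (k := k) i j)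
    rwa [map_mul, map_add, map_mul, apply_ite (RingQuot.mkAlgHom k (WeylRel k d)), map_one,
      map_zero] at this

theorem adjoin_range_del_union_range_t (k : Type*) [CommRing k] (d : ℕ) :
    Algebra.adjoin k (Set.range (del k d) ∪ Set.range (t k d)) = ⊤ := by
  have generators : Set.range (del k d) ∪ Set.range (t k d) =
      RingQuot.mkAlgHom k (WeylRel k d) '' Set.range (FreeAlgebra.ι k) := by
    rw [← Set.range_comp, Set.union_comm, ← Set.Sum.elim_range]
    congr 1
    ext (i | i) <;> rfl
  rw [generators, ← AlgHom.map_adjoin, FreeAlgebra.adjoin_range_ι, Algebra.map_top,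
    AlgHom.range_eq_top]
  exact RingQuot.mkAlgHom_surjective k _

end WeylAlgebra

open WeylAlgebra in
/-- In characteristic `p`, the natural map `W ⊗_Z A → End_A(W)`, `δ ⊗ a ↦ (x ↦ δ·x·a)`, is
an isomorphism of rings, where `W` is the Weyl algebra, `Z` its center and `A = Z_W(k[t])`
the centralizer of the `t`'s, and `W` is a right `A`-module by right multiplication.
Since the monomials `t^I ∂^J` with exponents in `{0,…,p−1}` form a `Z`-basis of `W`, every
element of `W ⊗_Z A` is uniquely `Σ_{I,J} (t^I ∂^J) ⊗ c_{I,J}` with `c_{I,J} ∈ A`; so the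
bijectivity of the natural map says precisely: every right-`A`-linear endomorphism `g` of
`W` is of the form `x ↦ Σ_{I,J} t^I ∂^J · x · c_{I,J}` for a unique family `c` in `A`. -/
theorem weylAlgebra_tensor_centralizer_equiv_end (p : ℕ) (hp : p.Prime)
    (k : Type*) [CommRing k] (hchar : (p : k) = 0) (d : ℕ) (hd : 1 ≤ d) :
    ∀ g : WeylAlgebra k d →+ WeylAlgebra k d,
      (∀ x : WeylAlgebra k d,
        ∀ a ∈ Subalgebra.centralizer k
          ((Algebra.adjoin k (Set.range (t k d)) : Subalgebra k (WeylAlgebra k d)) :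
            Set (WeylAlgebra k d)), g (x * a) = g x * a) →
      ∃! c : ((Fin d → Fin p) × (Fin d → Fin p)) →
          Subalgebra.centralizer k
            ((Algebra.adjoin k (Set.range (t k d)) : Subalgebra k (WeylAlgebra k d)) :
              Set (WeylAlgebra k d)),
        ∀ x : WeylAlgebra k d,
          g x = ∑ IJ : (Fin d → Fin p) × (Fin d → Fin p),
            (monomialT k d fun i => (IJ.1 i : ℕ)) * (monomialD k d fun i => (IJ.2 i : ℕ)) *
              x * (c IJ : WeylAlgebra k d) := by
  simpa only [reducedMonomial, monomialT, monomialD, List.ofFn_eq_map] using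
    weylAlgebra_tensor_centralizer_equiv_end_general hp hchar (canonicalCommutation_del_t k d)
      (adjoin_range_del_union_range_t k d)
end
end

section
/- Let p be a prime, k a commutative ring with p·1 = 0, and R = k[t_1, …, t_d] the polynomial ring in d variables (d ≥ 1). Let A ⊆ R be the k-subalgebra generated by t_1^p, …, t_d^p. Consider the k-algebra homomorphism ρ from the d-th Weyl algebra W_d(k) to End_A(R) (A-linear endomorphisms of R) determined by sending t_i to multiplication by t_i and ∂_i to the partial derivative ∂/∂t_i. Then ρ is surjective, and its kernel is the two-sided ideal of W_d(k) generated by ∂_1^p, …, ∂_d^p; consequently W_d(k)/⟨∂_1^p, …, ∂_d^p⟩ ≅ End_A(R). -/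
noncomputable section

/-!
Write `R = k[t_1, …, t_d]` and call a multi-index `J` small if all its entries are `< p`.
Evaluating the operators `∂^I` on the monomials `t^J`, for small `I` and `J`, gives a matrix over
`R` which is triangular for the componentwise order, because `∂^I t^J = 0` unless `I ≤ J`. Its
diagonal entries are the products `∏ i, (J i)!`, which are units as `p` is prime and zero in `k`.
The matrix is therefore invertible. As the small `t^J` generate `R` over `A`, this makes the small
`∂^J` a basis of `End_A(R)` over `R`. In the Weyl algebra the `t`'s can be moved to the left of the
`∂`'s, so modulo the ideal generated by the `∂_i^p` every element is an `R`-combination of the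
small `∂^J`; the coefficients vanish when `ρ` kills the element.
-/

section Matrix

theorem isUnit_matrix_of_triangular {ι S : Type*} [Fintype ι] [DecidableEq ι] [PartialOrder ι]
    [CommRing S] (M : Matrix ι ι S) (hM : ∀ i j, ¬ j ≤ i → M i j = 0)
    (hdiag : ∀ i, IsUnit (M i i)) : IsUnit M := by
  let : Fintype (LinearExtension ι) := inferInstanceAs (Fintype ι)
  let e : LinearExtension ι ≃ ι := Equiv.refl ι
  have hlower : (M.submatrix e e).IsLowerTriangular := fun i j hij =>
    hM _ _ fun hji => (toLinearExtension.monotone hji).not_gt hij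
  rw [← Matrix.isUnit_submatrix_equiv e e, Matrix.isUnit_iff_isUnit_det,
    Matrix.det_of_isLowerTriangular _ hlower, IsUnit.prod_iff]
  exact fun i _ => hdiag (e i)

end Matrix

section Commute

open MvPolynomial
open scoped IsMulCommutative

variable {σ k W : Type*} [CommSemiring k] [Semiring W] [Algebra k W]

/-- Evaluation of polynomials at a family of pairwise commuting elements of a possibly
noncommutative algebra; it is carried out in the commutative subalgebra the family generates. -/
def aevalOfCommute (x : σ → W) (hx : ∀ i j, Commute (x i) (x j)) : MvPolynomial σ k →ₐ[k] W :=
  haveI := Algebra.isMulCommutative_adjoin k (s := Set.range x)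
    (by rintro _ ⟨i, rfl⟩ _ ⟨j, rfl⟩; exact hx i j)
  (Algebra.adjoin k (Set.range x)).val.comp
    (aeval (S₁ := Algebra.adjoin k (Set.range x)) fun i =>
      ⟨x i, Algebra.subset_adjoin (Set.mem_range_self i)⟩)

@[simp]
theorem aevalOfCommute_X (x : σ → W) (hx : ∀ i j, Commute (x i) (x j)) (i : σ) :
    aevalOfCommute (k := k) x hx (X i) = x i := by
  simp [aevalOfCommute]

end Commute

section DiffOp

open MvPolynomial

variable {σ k : Type*} [CommRing k]

theorem commute_pderiv (i j : σ) :
    Commute (pderiv i : Derivation k (MvPolynomial σ k) (MvPolynomial σ k)).toLinearMap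
      (pderiv j).toLinearMap := by
  classical
  have hbracket : ⁅pderiv (R := k) i, pderiv (R := k) j⁆ = 0 :=
    derivation_ext fun l => by
      simp [Derivation.commutator_apply, pderiv_X, Pi.single_apply, apply_ite]
  refine LinearMap.ext fun f => sub_eq_zero.1 ?_
  exact DFunLike.congr_fun hbracket f

/-- The differential operator with constant coefficients attached to a polynomial `f`, obtained by
substituting `∂/∂t_i` for the variable `t_i` of `f`. -/
def diffOp : MvPolynomial σ k →ₐ[k] Module.End k (MvPolynomial σ k) :=
  aevalOfCommute (fun i => (pderiv i).toLinearMap) commute_pderiv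

@[simp]
theorem diffOp_X (i : σ) : diffOp (X i : MvPolynomial σ k) = (pderiv i).toLinearMap :=
  aevalOfCommute_X _ _ i

theorem diffOp_monomial_single (i : σ) (n : ℕ) (u : σ →₀ ℕ) (a : k) :
    diffOp (monomial (Finsupp.single i n) 1) (monomial u a) =
      monomial (u - Finsupp.single i n) (a * (u i).descFactorial n) := by
  induction n with
  | zero => simp
  | succ n ih =>
    have hsucc : monomial (Finsupp.single i (n + 1)) (1 : k) =
        X i * monomial (Finsupp.single i n) 1 := by
      rw [X, monomial_mul, one_mul, ← Finsupp.single_add, add_comm]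
    rw [hsucc, map_mul, Module.End.mul_apply, ih, diffOp_X, Derivation.coeFn_coe, pderiv_monomial,
      tsub_tsub, ← Finsupp.single_add]
    simp [Nat.descFactorial_succ, mul_left_comm, mul_comm]

theorem diffOp_monomial (s u : σ →₀ ℕ) (a : k) :
    diffOp (monomial s 1) (monomial u a) =
      monomial (u - s) (a * s.prod fun i n => ((u i).descFactorial n : k)) := by
  induction s using Finsupp.induction with
  | zero => simp
  | single_add i n s hi _ ih =>
    have hsplit : monomial (Finsupp.single i n + s) (1 : k) =
        monomial (Finsupp.single i n) 1 * monomial s 1 := by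
      rw [monomial_mul, one_mul]
    have hdisj : Disjoint (Finsupp.single i n).support s.support :=
      (Finset.disjoint_singleton_left.2 hi).mono_left Finsupp.support_single_subset
    rw [hsplit, map_mul, Module.End.mul_apply, ih, diffOp_monomial_single, tsub_tsub,
      Finsupp.prod_add_index_of_disjoint hdisj, Finsupp.prod_single_index (by simp),
      Finsupp.tsub_apply, Finsupp.notMem_support_iff.1 hi, tsub_zero, add_comm s]
    congr 1
    ring

theorem diffOp_monomial_of_not_le {s u : σ →₀ ℕ} (h : ¬ s ≤ u) (a : k) :
    diffOp (monomial s 1) (monomial u a) = 0 := by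
  obtain ⟨i, hi⟩ := not_forall.1 h
  have hi : u i < s i := not_le.1 hi
  rw [diffOp_monomial, Finsupp.prod, Finset.prod_eq_zero (i := i), mul_zero, map_zero]
  · exact Finsupp.mem_support_iff.2 (Nat.ne_zero_of_lt hi)
  · rw [Nat.descFactorial_of_lt hi, Nat.cast_zero]

theorem diffOp_monomial_self (s : σ →₀ ℕ) :
    diffOp (monomial s 1) (monomial s 1) =
      (C (s.prod fun _ n => (n.factorial : k)) : MvPolynomial σ k) := by
  simp [diffOp_monomial, Finsupp.prod, Nat.descFactorial_self]

theorem pderiv_pow_eq_zero {n : ℕ} (hn : (n : k) = 0) (hn0 : n ≠ 0) (i : σ) :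
    ((pderiv i).toLinearMap : Module.End k (MvPolynomial σ k)) ^ n = 0 := by
  rw [← diffOp_X, ← map_pow, X_pow_eq_monomial]
  refine linearMap_ext fun u => LinearMap.ext fun a => ?_
  obtain ⟨m, hm⟩ : n ∣ (u i).descFactorial n :=
    (Nat.dvd_factorial (Nat.pos_of_ne_zero hn0) le_rfl).trans (Nat.factorial_dvd_descFactorial _ _)
  simp [diffOp_monomial_single, hm, hn]

end DiffOp

section PowLinearEnd

open MvPolynomial

variable {σ k : Type*} [CommRing k] {n : ℕ}

variable (σ k n) in
/-- The algebra `End_A(R)` of `A`-linear endomorphisms of `R = k[X_i]`, where `A = k[X_i ^ n]`. It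
is encoded as the centralizer in `End_k(R)` of the multiplications by elements of `A`. -/
def powLinearEnd : Subalgebra k (Module.End k (MvPolynomial σ k)) :=
  Subalgebra.centralizer k (Algebra.lmul k (MvPolynomial σ k) ''
    Algebra.adjoin k (Set.range fun i => (X i : MvPolynomial σ k) ^ n))

theorem mem_powLinearEnd {g : Module.End k (MvPolynomial σ k)} :
    g ∈ powLinearEnd σ k n ↔ ∀ a f : MvPolynomial σ k,
      a ∈ Algebra.adjoin k (Set.range fun i => (X i : MvPolynomial σ k) ^ n) →
        g (a * f) = a * g f := by
  simp only [powLinearEnd, Subalgebra.mem_centralizer_iff, Set.forall_mem_image,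
    LinearMap.ext_iff, Module.End.mul_apply, Algebra.coe_lmul_eq_mul, LinearMap.mul_apply']
  exact ⟨fun h a f ha => (h ha f).symm, fun h a ha f => (h a f ha).symm⟩

theorem lmul_mem_powLinearEnd (f : MvPolynomial σ k) :
    Algebra.lmul k (MvPolynomial σ k) f ∈ powLinearEnd σ k n :=
  mem_powLinearEnd.2 fun a g _ => mul_left_comm f a g

theorem pderiv_eq_zero_of_mem_adjoin_pow (hn : (n : k) = 0) (i : σ) {a : MvPolynomial σ k}
    (ha : a ∈ Algebra.adjoin k (Set.range fun j => (X j : MvPolynomial σ k) ^ n)) :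
    pderiv i a = 0 := by
  refine Derivation.eqOn_adjoin (D1 := pderiv i) (D2 := 0) ?_ ha
  rintro _ ⟨j, rfl⟩
  have hn' : (n : MvPolynomial σ k) = 0 := by rw [← map_natCast C, hn, map_zero]
  simp [hn']

theorem pderiv_mem_powLinearEnd (hn : (n : k) = 0) (i : σ) :
    (pderiv i).toLinearMap ∈ powLinearEnd σ k n :=
  mem_powLinearEnd.2 fun a f ha => by
    simp [Derivation.leibniz, pderiv_eq_zero_of_mem_adjoin_pow hn i ha]

theorem diffOp_mem_powLinearEnd (hn : (n : k) = 0) (f : MvPolynomial σ k) :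
    diffOp f ∈ powLinearEnd σ k n := by
  induction f using MvPolynomial.induction_on with
  | C a => simp [← algebraMap_eq]
  | add f g hf hg => simpa using add_mem hf hg
  | mul_X f i hf => simpa using mul_mem hf (pderiv_mem_powLinearEnd hn i)

end PowLinearEnd

section Box

open MvPolynomial

variable {σ k : Type*} [Fintype σ] [CommRing k] {n : ℕ}

/-- A multi-index with all entries `< n`, as the exponent of a monomial. -/
def boxExponent (J : σ → Fin n) : σ →₀ ℕ :=
  Finsupp.equivFunOnFinite.symm fun i => J i

@[simp]
theorem boxExponent_apply (J : σ → Fin n) (i : σ) : boxExponent J i = J i := rfl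

theorem boxExponent_le_iff {I J : σ → Fin n} : boxExponent I ≤ boxExponent J ↔ I ≤ J := Iff.rfl

theorem exists_boxExponent_eq {s : σ →₀ ℕ} (hs : ∀ i, s i < n) :
    ∃ J : σ → Fin n, boxExponent J = s :=
  ⟨fun i => ⟨s i, hs i⟩, Finsupp.ext fun _ => rfl⟩

theorem monomial_eq_mul_boxExponent (hn : n ≠ 0) (s : σ →₀ ℕ) :
    ∃ a ∈ Algebra.adjoin k (Set.range fun i => (X i : MvPolynomial σ k) ^ n),
      ∃ J : σ → Fin n, monomial s 1 = a * monomial (boxExponent J) 1 := by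
  refine ⟨∏ i, (X i ^ n) ^ (s i / n),
    prod_mem fun i _ => pow_mem (Algebra.subset_adjoin (Set.mem_range_self i)) _,
    fun i => ⟨s i % n, Nat.mod_lt _ (Nat.pos_of_ne_zero hn)⟩, ?_⟩
  rw [monomial_eq, monomial_eq, Finsupp.prod_fintype _ _ (by simp),
    Finsupp.prod_fintype _ _ (by simp), map_one, one_mul, one_mul, ← Finset.prod_mul_distrib]
  refine Finset.prod_congr rfl fun i _ => ?_
  rw [← pow_mul, ← pow_add, boxExponent_apply, Nat.div_add_mod]

theorem powLinearEnd_ext (hn : n ≠ 0) {g h : Module.End k (MvPolynomial σ k)}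
    (hg : g ∈ powLinearEnd σ k n) (hh : h ∈ powLinearEnd σ k n)
    (hgh : ∀ J : σ → Fin n, g (monomial (boxExponent J) 1) = h (monomial (boxExponent J) 1)) :
    g = h := by
  refine (basisMonomials σ k).ext fun s => ?_
  obtain ⟨a, ha, J, hs⟩ := monomial_eq_mul_boxExponent (k := k) hn s
  simp only [coe_basisMonomials]
  rw [hs, mem_powLinearEnd.1 hg _ _ ha, mem_powLinearEnd.1 hh _ _ ha, hgh]

variable (σ k n) in
/-- The matrix whose `J`-th row lists the values of the operators `∂^I` on `t^J`; both multi-indices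
range over those with all entries `< n`. -/
def derivMatrix : Matrix (σ → Fin n) (σ → Fin n) (MvPolynomial σ k) :=
  Matrix.of fun J I => diffOp (monomial (boxExponent I) 1) (monomial (boxExponent J) 1)

variable [DecidableEq σ]

theorem isUnit_derivMatrix (hn : IsUnit ((n - 1).factorial : k)) : IsUnit (derivMatrix σ k n) := by
  refine isUnit_matrix_of_triangular _ (fun J I h => ?_) fun J => ?_
  · exact diffOp_monomial_of_not_le (mt boxExponent_le_iff.1 h) 1
  · rw [derivMatrix, Matrix.of_apply, diffOp_monomial_self]
    refine IsUnit.map C (Submonoid.prod_mem (IsUnit.submonoid k) fun i _ => ?_)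
    exact hn.natCast_factorial_of_lt (J i).2

section BoxSum

variable {W W' : Type*} [Semiring W] [Algebra k W] [Semiring W'] [Algebra k W']

variable (n) in
/-- The normally ordered sum `∑ J, T (c J) * D (X ^ J)` over the multi-indices with all entries
`< n`. Here `T` is meant to map polynomials to polynomials in the coordinates, and `D` to
polynomials in the derivatives. -/
def boxSum (T D : MvPolynomial σ k →ₐ[k] W) : ((σ → Fin n) → MvPolynomial σ k) →ₗ[k] W :=
  ∑ J, LinearMap.mulRight k (D (monomial (boxExponent J) 1)) ∘ₗ T.toLinearMap ∘ₗ LinearMap.proj J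

theorem boxSum_apply (T D : MvPolynomial σ k →ₐ[k] W) (c : (σ → Fin n) → MvPolynomial σ k) :
    boxSum n T D c = ∑ J, T (c J) * D (monomial (boxExponent J) 1) := by
  simp [boxSum]

theorem map_boxSum (f : W →ₐ[k] W') (T D : MvPolynomial σ k →ₐ[k] W)
    (c : (σ → Fin n) → MvPolynomial σ k) :
    f (boxSum n T D c) = boxSum n (f.comp T) (f.comp D) c := by
  simp [boxSum_apply]

theorem boxSum_single (T D : MvPolynomial σ k →ₐ[k] W) (J : σ → Fin n) (f : MvPolynomial σ k) :
    boxSum n T D (Pi.single J f) = T f * D (monomial (boxExponent J) 1) := by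
  rw [boxSum_apply, Finset.sum_eq_single J (fun I _ hI => by simp [hI]) (by simp),
    Pi.single_eq_same]

end BoxSum

theorem boxSum_lmul_diffOp_apply (c : (σ → Fin n) → MvPolynomial σ k) (J : σ → Fin n) :
    boxSum n (Algebra.lmul k _) diffOp c (monomial (boxExponent J) 1) =
      (derivMatrix σ k n).mulVec c J := by
  simp [boxSum_apply, derivMatrix, Matrix.mulVec, dotProduct, mul_comm]

theorem boxSum_lmul_diffOp_injective (hn : IsUnit ((n - 1).factorial : k)) :
    Function.Injective (boxSum n (Algebra.lmul k (MvPolynomial σ k)) diffOp) := by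
  intro c c' h
  refine Matrix.mulVec_injective_of_isUnit (isUnit_derivMatrix hn) (funext fun J => ?_)
  rw [← boxSum_lmul_diffOp_apply, h, boxSum_lmul_diffOp_apply]

theorem boxSum_lmul_diffOp_mem_powLinearEnd (hn : (n : k) = 0)
    (c : (σ → Fin n) → MvPolynomial σ k) :
    boxSum n (Algebra.lmul k _) diffOp c ∈ powLinearEnd σ k n := by
  rw [boxSum_apply]
  exact sum_mem fun J _ => mul_mem (lmul_mem_powLinearEnd _) (diffOp_mem_powLinearEnd hn _)

theorem exists_boxSum_lmul_diffOp_eq (hn0 : n ≠ 0) (hn : (n : k) = 0)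
    (hu : IsUnit ((n - 1).factorial : k))
    {g : Module.End k (MvPolynomial σ k)} (hg : g ∈ powLinearEnd σ k n) :
    ∃ c, boxSum n (Algebra.lmul k _) diffOp c = g := by
  obtain ⟨c, hc⟩ := Matrix.mulVec_surjective_iff_isUnit.2 (isUnit_derivMatrix hu)
    fun J => g (monomial (boxExponent J) 1)
  refine ⟨c, powLinearEnd_ext hn0 (boxSum_lmul_diffOp_mem_powLinearEnd hn c) hg fun J => ?_⟩
  rw [boxSum_lmul_diffOp_apply, hc]

end Box

namespace WeylAlgebra

open MvPolynomial

variable {k : Type*} [CommRing k] {d : ℕ}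

theorem commute_t (i j : Fin d) : Commute (t k d i) (t k d j) := by
  simpa [t, Commute, SemiconjBy] using RingQuot.mkAlgHom_rel k (WeylRel.tt (k := k) i j)

theorem commute_del (i j : Fin d) : Commute (del k d i) (del k d j) := by
  simpa [del, Commute, SemiconjBy] using RingQuot.mkAlgHom_rel k (WeylRel.dd (k := k) i j)

theorem del_mul_t (i j : Fin d) :
    del k d i * t k d j = t k d j * del k d i + if i = j then 1 else 0 := by
  simpa [t, del, apply_ite] using RingQuot.mkAlgHom_rel k (WeylRel.dt (k := k) i j)

@[elab_as_elim]
theorem induction {motive : WeylAlgebra k d → Prop}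
    (algebraMap : ∀ r, motive (algebraMap k _ r)) (t : ∀ i, motive (t k d i))
    (del : ∀ i, motive (del k d i))
    (mul : ∀ v w, motive v → motive w → motive (v * w))
    (add : ∀ v w, motive v → motive w → motive (v + w)) (w : WeylAlgebra k d) : motive w := by
  obtain ⟨x, rfl⟩ := RingQuot.mkAlgHom_surjective k (WeylRel k d) w
  induction x with
  | grade0 r => simpa using algebraMap r
  | grade1 x => exact x.casesOn t del
  | mul a b ha hb => simpa using mul _ _ ha hb
  | add a b ha hb => simpa using add _ _ ha hb

variable (k d) in
/-- The homomorphism from `k[t_1, …, t_d]` to the Weyl algebra sending `t_i` to `t_i`. -/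
def polyT : MvPolynomial (Fin d) k →ₐ[k] WeylAlgebra k d := aevalOfCommute (t k d) commute_t

variable (k d) in
/-- The homomorphism from the polynomial ring to the Weyl algebra sending the variables to the
`∂_i`. -/
def polyD : MvPolynomial (Fin d) k →ₐ[k] WeylAlgebra k d := aevalOfCommute (del k d) commute_del

@[simp]
theorem polyT_X (i : Fin d) : polyT k d (X i) = t k d i := aevalOfCommute_X _ _ i

@[simp]
theorem polyD_X (i : Fin d) : polyD k d (X i) = del k d i := aevalOfCommute_X _ _ i

theorem del_mul_polyT (i : Fin d) (f : MvPolynomial (Fin d) k) :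
    del k d i * polyT k d f = polyT k d f * del k d i + polyT k d (pderiv i f) := by
  induction f using MvPolynomial.induction_on with
  | C a =>
    rw [pderiv_C, map_zero, add_zero, ← algebraMap_eq, AlgHom.commutes]
    exact (Algebra.commutes a _).symm
  | add f g hf hg => simp only [map_add, mul_add, add_mul, hf, hg]; abel
  | mul_X f j hf =>
    have hX : polyT k d (pderiv i (X j)) = if i = j then 1 else 0 := by
      rw [pderiv_X, Pi.single_apply, apply_ite (polyT k d), map_one, map_zero]
      exact if_congr eq_comm rfl rfl
    calc del k d i * polyT k d (f * X j)
        = polyT k d f * (del k d i * t k d j) + polyT k d (pderiv i f) * t k d j := by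
          rw [map_mul, polyT_X, ← mul_assoc, hf, add_mul, mul_assoc]
      _ = polyT k d (f * X j) * del k d i + polyT k d (pderiv i (f * X j)) := by
          rw [del_mul_t, pderiv_mul, map_add, map_mul, map_mul, map_mul, hX, polyT_X, mul_add,
            mul_assoc]
          abel

theorem range_polyT_mul_range_polyD :
    (polyT k d).range.toSubmodule * (polyD k d).range.toSubmodule = ⊤ := by
  set M := (polyT k d).range.toSubmodule * (polyD k d).range.toSubmodule
  have mem (f g) : polyT k d f * polyD k d g ∈ M := Submodule.mul_mem_mul ⟨f, rfl⟩ ⟨g, rfl⟩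
  suffices left_ideal : ∀ w, ∀ u ∈ M, w * u ∈ M by
    exact Submodule.eq_top_iff'.2 fun w => by simpa using left_ideal w 1 (by simpa using mem 1 1)
  intro w
  induction w using WeylAlgebra.induction with
  | algebraMap r => exact fun u hu => by simpa [← Algebra.smul_def] using M.smul_mem r hu
  | mul v w hv hw => exact fun u hu => by simpa [mul_assoc] using hv _ (hw _ hu)
  | add v w hv hw => exact fun u hu => by simpa [add_mul] using add_mem (hv _ hu) (hw _ hu)
  | t i =>
    intro u hu
    induction hu using Submodule.mul_induction_on' with
    | mem_mul_mem x hx y hy =>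
      obtain ⟨⟨f, rfl⟩, g, rfl⟩ := And.intro hx hy
      have := mem (X i * f) g
      rwa [map_mul, polyT_X, mul_assoc] at this
    | add u _ v _ hu hv => simpa [mul_add] using add_mem hu hv
  | del i =>
    intro u hu
    induction hu using Submodule.mul_induction_on' with
    | mem_mul_mem x hx y hy =>
      obtain ⟨⟨f, rfl⟩, g, rfl⟩ := And.intro hx hy
      have := add_mem (mem f (X i * g)) (mem (pderiv i f) g)
      simpa [← mul_assoc, del_mul_polyT, add_mul] using this
    | add u _ v _ hu hv => simpa [mul_add] using add_mem hu hv

theorem polyD_monomial_mem_span {n : ℕ} {s : Fin d →₀ ℕ} {i : Fin d} (hi : n ≤ s i) :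
    polyD k d (monomial s 1) ∈ TwoSidedIdeal.span (Set.range fun i => del k d i ^ n) := by
  have hs : monomial s (1 : k) = monomial (s - Finsupp.single i n) 1 * X i ^ n := by
    rw [X_pow_eq_monomial, monomial_mul, one_mul, tsub_add_cancel_of_le (by simpa using hi)]
  rw [hs, map_mul, map_pow, polyD_X]
  exact TwoSidedIdeal.mul_mem_left _ _ _ (TwoSidedIdeal.subset_span ⟨i, rfl⟩)

theorem polyT_mul_polyD_mem (n : ℕ) (f g : MvPolynomial (Fin d) k) :
    polyT k d f * polyD k d g ∈ LinearMap.range (boxSum n (polyT k d) (polyD k d)) ⊔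
      (TwoSidedIdeal.span (Set.range fun i => del k d i ^ n)).asIdeal.restrictScalars k := by
  induction g using MvPolynomial.induction_on' with
  | add g h hg hh => simpa only [map_add, mul_add] using add_mem hg hh
  | monomial s a =>
    have hs : monomial s a = a • monomial s 1 := by rw [smul_monomial, smul_eq_mul, mul_one]
    rw [hs, map_smul, mul_smul_comm]
    refine Submodule.smul_mem _ a ?_
    by_cases hbox : ∀ i, s i < n
    · obtain ⟨J, rfl⟩ := exists_boxExponent_eq hbox
      exact Submodule.mem_sup_left ⟨Pi.single J f, boxSum_single ..⟩
    · obtain ⟨i, hi⟩ := not_forall.1 hbox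
      exact Submodule.mem_sup_right
        (TwoSidedIdeal.mul_mem_left _ _ _ (polyD_monomial_mem_span (not_lt.1 hi)))

theorem exists_sub_boxSum_mem_span (n : ℕ) (w : WeylAlgebra k d) :
    ∃ c, w - boxSum n (polyT k d) (polyD k d) c ∈
      TwoSidedIdeal.span (Set.range fun i => del k d i ^ n) := by
  have hle : (polyT k d).range.toSubmodule * (polyD k d).range.toSubmodule ≤ _ :=
    Submodule.mul_le.2 fun _ ⟨f, hf⟩ _ ⟨g, hg⟩ => hf ▸ hg ▸ polyT_mul_polyD_mem n f g
  rw [range_polyT_mul_range_polyD] at hle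
  obtain ⟨_, ⟨c, rfl⟩, v, hv, rfl⟩ := Submodule.mem_sup.1 (hle (Submodule.mem_top (x := w)))
  exact ⟨c, by simpa using hv⟩

section Representation

variable {ρ : WeylAlgebra k d →ₐ[k] Module.End k (MvPolynomial (Fin d) k)}

theorem comp_polyT_eq_lmul
    (hρt : ∀ (i : Fin d) (f : MvPolynomial (Fin d) k), ρ (t k d i) f = X i * f) :
    ρ.comp (polyT k d) = Algebra.lmul k (MvPolynomial (Fin d) k) :=
  algHom_ext fun i => LinearMap.ext fun f => by simp [hρt]

theorem comp_polyD_eq_diffOp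
    (hρd : ∀ (i : Fin d) (f : MvPolynomial (Fin d) k), ρ (del k d i) f = pderiv i f) :
    ρ.comp (polyD k d) = diffOp :=
  algHom_ext fun i => LinearMap.ext fun f => by simp [hρd]

theorem map_mem_powLinearEnd {n : ℕ} (hn : (n : k) = 0)
    (hρt : ∀ (i : Fin d) (f : MvPolynomial (Fin d) k), ρ (t k d i) f = X i * f)
    (hρd : ∀ (i : Fin d) (f : MvPolynomial (Fin d) k), ρ (del k d i) f = pderiv i f)
    (w : WeylAlgebra k d) : ρ w ∈ powLinearEnd (Fin d) k n := by
  induction w using WeylAlgebra.induction with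
  | algebraMap r => simp
  | t i =>
    have ht : ρ (t k d i) = Algebra.lmul k _ (X i) := LinearMap.ext (hρt i)
    exact ht ▸ lmul_mem_powLinearEnd _
  | del i =>
    have hdel : ρ (del k d i) = (pderiv i).toLinearMap := LinearMap.ext (hρd i)
    exact hdel ▸ pderiv_mem_powLinearEnd hn i
  | mul v w hv hw => simpa using mul_mem hv hw
  | add v w hv hw => simpa using add_mem hv hw

theorem map_eq_zero_of_mem_span {n : ℕ} (hn : (n : k) = 0) (hn0 : n ≠ 0)
    (hρd : ∀ (i : Fin d) (f : MvPolynomial (Fin d) k), ρ (del k d i) f = pderiv i f)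
    {w : WeylAlgebra k d}
    (hw : w ∈ TwoSidedIdeal.span (Set.range fun i => del k d i ^ n)) : ρ w = 0 := by
  suffices hle : TwoSidedIdeal.span (Set.range fun i => del k d i ^ n) ≤ TwoSidedIdeal.ker ρ from
    (TwoSidedIdeal.mem_ker ρ).1 (hle hw)
  rw [TwoSidedIdeal.span_le]
  rintro _ ⟨i, rfl⟩
  have hdel : ρ (del k d i) = (pderiv i).toLinearMap := LinearMap.ext (hρd i)
  rw [SetLike.mem_coe, TwoSidedIdeal.mem_ker, map_pow, hdel, pderiv_pow_eq_zero hn hn0]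

end Representation

end WeylAlgebra

open WeylAlgebra MvPolynomial in
/-- In characteristic `p`, the representation `ρ` of the Weyl algebra `W_d(k)` on
`R = k[t_1,…,t_d]`, sending `t_i` to multiplication by `t_i` and `∂_i` to `∂/∂t_i`, takes
values in the `A`-linear endomorphisms of `R` for `A = k[t_1^p,…,t_d^p]`, is surjective
onto them, and has kernel the two-sided ideal generated by `∂_1^p, …, ∂_d^p`; consequently
`W_d(k)/⟨∂_1^p,…,∂_d^p⟩ ≅ End_A(R)`. -/
theorem weylAlgebra_acts_on_polynomials (p : ℕ) (hp : p.Prime)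
    (k : Type*) [CommRing k] (hchar : (p : k) = 0) (d : ℕ) (hd : 1 ≤ d)
    (ρ : WeylAlgebra k d →ₐ[k] Module.End k (MvPolynomial (Fin d) k))
    (hρt : ∀ (i : Fin d) (f : MvPolynomial (Fin d) k), ρ (t k d i) f = X i * f)
    (hρd : ∀ (i : Fin d) (f : MvPolynomial (Fin d) k), ρ (del k d i) f = pderiv i f) :
    (∀ (w : WeylAlgebra k d) (a f : MvPolynomial (Fin d) k),
      a ∈ Algebra.adjoin k (Set.range fun i : Fin d => (X i : MvPolynomial (Fin d) k) ^ p) →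
      ρ w (a * f) = a * ρ w f) ∧
    (∀ g : Module.End k (MvPolynomial (Fin d) k),
      (∀ a f : MvPolynomial (Fin d) k,
        a ∈ Algebra.adjoin k (Set.range fun i : Fin d => (X i : MvPolynomial (Fin d) k) ^ p) →
        g (a * f) = a * g f) →
      ∃ w : WeylAlgebra k d, ρ w = g) ∧
    (∀ w : WeylAlgebra k d,
      ρ w = 0 ↔ w ∈ TwoSidedIdeal.span (Set.range fun i : Fin d => del k d i ^ p)) := by
  have : Fact p.Prime := ⟨hp⟩
  have hunit : IsUnit ((p - 1).factorial : k) :=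
    IsUnit.natCast_factorial_of_isNilpotent (hchar ▸ .zero) (Nat.sub_one_lt hp.ne_zero)
  have hρT := comp_polyT_eq_lmul hρt
  have hρD := comp_polyD_eq_diffOp hρd
  have hρbox c : ρ (boxSum p (polyT k d) (polyD k d) c) = boxSum p (Algebra.lmul k _) diffOp c := by
    rw [map_boxSum, hρT, hρD]
  have hρspan {w} (hw : w ∈ TwoSidedIdeal.span (Set.range fun i => del k d i ^ p)) : ρ w = 0 :=
    map_eq_zero_of_mem_span hchar hp.ne_zero hρd hw
  refine ⟨fun w => mem_powLinearEnd.1 (map_mem_powLinearEnd hchar hρt hρd w),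
    fun g hg => ?_, fun w => ⟨fun hw => ?_, hρspan⟩⟩
  · obtain ⟨c, hc⟩ := exists_boxSum_lmul_diffOp_eq hp.ne_zero hchar hunit (mem_powLinearEnd.2 hg)
    exact ⟨boxSum p (polyT k d) (polyD k d) c, (hρbox c).trans hc⟩
  · obtain ⟨c, hc⟩ := exists_sub_boxSum_mem_span p w
    have hbox : boxSum p (Algebra.lmul k _) diffOp c = 0 := by
      simpa [hw, hρbox] using hρspan hc
    have hc0 : c = 0 := boxSum_lmul_diffOp_injective hunit (hbox.trans (map_zero _).symm)
    simpa [hc0] using hc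
end
end
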